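/- arXiv:2306.08983 — 2 statements merged into one kernel-verified Lean document; each statement's English description precedes it below -/
import Mathlib

section
/- Let H be a Hopf algebra over a field k acting on a quadratic algebra A = T(V)/(R) by degree-preserving endomorphisms making A an H-module algebra, where V = A₁ and R ⊆ V⊗V. If μ is a counital 2-cocycle of H, then the Drinfeld twist A_μ is a quadratic algebra, and A_μ = T(V)/(R_μ) where R_μ := { μ ▷ r | r ∈ R } ⊆ V⊗V. -/
/-!
The action of `H` on `V = A₁` extends to an `H`-module algebra structure on `T(V)`: an action by
an `H`-module algebra structure is the same as an algebra map into the convolution algebra of maps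
from `H`, so freeness of `T(V)` produces it (`tensorModuleAlgebra`), and the canonical projection
`p : T(V) → A` is `H`-linear (`lift_act`).

The cocycle identity makes the twisted product on `T(V)` associative, so there is a unique algebra
map `ψ : T(V) → T(V)_μ` that is the identity on `V` (`twistMap`). It is bijective
(`twistMap_surjective`, `twistMap_injective`): since `μ` is invertible, `μ⁻¹` acts bijectively on
`X ⊗ Y` for `H`-stable `X, Y`, so products of stable subspaces are the same for the twisted and
untwisted multiplications; thus `ψ` maps `V^{⊗n}` onto itself, and `V` is finite-dimensional.

If `e : A → A_μ` is the identity of underlying spaces, the canonical map `T(V) → A_μ` equals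
`e ∘ p ∘ ψ` (`lift_twist`). It is therefore surjective with kernel `ψ⁻¹(ker p)`. The space `R` is
the degree-two part of `ker p` (`mem_of_mem_ideal_of_degree_two`), hence `H`-stable; as `ψ` acts on
`V ⊗ V` by `μ⁻¹`, it carries `R_μ = μ ▷ R` to `R` (`map_twistMap_relTwist`). Because twisted and
untwisted products of stable subspaces agree, `ψ` carries the ideal generated by `R_μ` onto the one
generated by `R`, which is `ker p`. So the kernel is generated by `R_μ`. Grading, connectedness and
finite-dimensionality pass to `A_μ` directly.
-/

noncomputable section
namespace DrinfeldTwist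
open TensorProduct

universe u v

variable (k : Type u) [CommRing k]

/-! ### Tensor-square helper maps for a Hopf algebra -/

section Hopf
variable (H : Type v) [Ring H] [HopfAlgebra k H]

/-- `a ⊗ b ↦ a ⊗ b ⊗ 1` (legs 1,2 of the triple tensor product). -/
def incl12 : H ⊗[k] H →ₐ[k] H ⊗[k] (H ⊗[k] H) :=
  Algebra.TensorProduct.map (AlgHom.id k H) Algebra.TensorProduct.includeLeft

/-- `a ⊗ b ↦ 1 ⊗ a ⊗ b` (legs 2,3). -/
def incl23 : H ⊗[k] H →ₐ[k] H ⊗[k] (H ⊗[k] H) :=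
  Algebra.TensorProduct.includeRight

/-- `a ⊗ b ↦ a ⊗ 1 ⊗ b` (legs 1,3). -/
def incl13 : H ⊗[k] H →ₐ[k] H ⊗[k] (H ⊗[k] H) :=
  Algebra.TensorProduct.map (AlgHom.id k H) Algebra.TensorProduct.includeRight

/-- `Δ ⊗ id`, with values in `H ⊗ (H ⊗ H)`. -/
def comulLeft : H ⊗[k] H →ₗ[k] H ⊗[k] (H ⊗[k] H) :=
  (TensorProduct.assoc k H H H).toLinearMap ∘ₗ
    TensorProduct.map (Coalgebra.comul (R := k)) LinearMap.id

/-- `id ⊗ Δ`. -/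
def comulRight : H ⊗[k] H →ₗ[k] H ⊗[k] (H ⊗[k] H) :=
  TensorProduct.map LinearMap.id (Coalgebra.comul (R := k))

/-- `ε ⊗ id : H ⊗ H → H`. -/
def counitLeft : H ⊗[k] H →ₗ[k] H :=
  (TensorProduct.lid k H).toLinearMap ∘ₗ
    TensorProduct.map (Coalgebra.counit (R := k)) LinearMap.id

/-- `id ⊗ ε : H ⊗ H → H`. -/
def counitRight : H ⊗[k] H →ₗ[k] H :=
  (TensorProduct.rid k H).toLinearMap ∘ₗ
    TensorProduct.map LinearMap.id (Coalgebra.counit (R := k))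

variable {k H} in
/-- `μ` is a counital 2-cocycle on the Hopf algebra `H`, with inverse `μinv`:
it is invertible, satisfies `(μ⊗1)·(Δ⊗id)(μ) = (1⊗μ)·(id⊗Δ)(μ)` and
`(ε⊗id)(μ) = 1 = (id⊗ε)(μ)`. -/
structure IsCounitalCocycle (μ μinv : H ⊗[k] H) : Prop where
  mul_inv : μ * μinv = 1
  inv_mul : μinv * μ = 1
  cocycle : incl12 k H μ * comulLeft k H μ = incl23 k H μ * comulRight k H μ
  counit_left : counitLeft k H μ = 1
  counit_right : counitRight k H μ = 1

end Hopf

/-! ### Module algebras -/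

section MA
variable (H : Type v) [Ring H] [HopfAlgebra k H]
variable (A : Type u) [Ring A] [Algebra k A]

/-- The canonical algebra map `End(M) ⊗ End(N) → End(M ⊗ N)`. -/
def tensorEnd {M N : Type*} [AddCommGroup M] [Module k M] [AddCommGroup N] [Module k N] :
    (Module.End k M) ⊗[k] (Module.End k N) →ₐ[k] Module.End k (M ⊗[k] N) :=
  Module.endTensorEndAlgHom

/-- An `H`-module algebra structure on a `k`-algebra `A`: an action of `H` by
`k`-linear endomorphisms (an algebra map `H → End A`) such that
`h ▷ (a * b) = (h⁽¹⁾ ▷ a) * (h⁽²⁾ ▷ b)` and `h ▷ 1 = ε(h) • 1`. -/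
structure ModuleAlgebra : Type (max u v) where
  act : H →ₐ[k] Module.End k A
  act_mul : ∀ (h : H) (a b : A),
    act h (a * b) = LinearMap.mul' k A
      (((tensorEnd k).comp (Algebra.TensorProduct.map act act)) (Coalgebra.comul (R := k) h)
        (a ⊗ₜ[k] b))
  act_one : ∀ h : H, act h 1 = Coalgebra.counit (R := k) h • (1 : A)

variable {k H A}

/-- The action of an element of `H ⊗ H` on `A ⊗ A`. -/
def ModuleAlgebra.act2 (ma : ModuleAlgebra k H A) : H ⊗[k] H →ₐ[k] Module.End k (A ⊗[k] A) :=
  (tensorEnd k).comp (Algebra.TensorProduct.map ma.act ma.act)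

/-- The twisted product `m_ν(a ⊗ b) = m(ν ▷ (a ⊗ b))` (used with `ν = μ⁻¹` for the
Drinfeld twist). -/
def ModuleAlgebra.twProd (ma : ModuleAlgebra k H A) (ν : H ⊗[k] H) : A ⊗[k] A →ₗ[k] A :=
  LinearMap.mul' k A ∘ₗ (ma.act2 ν)

/-- The action of `H` preserves each graded component. -/
def ModuleAlgebra.DegreePreserving (ma : ModuleAlgebra k H A) (𝒜 : ℕ → Submodule k A) : Prop :=
  ∀ (h : H) (i : ℕ), (𝒜 i).map (ma.act h) ≤ 𝒜 i

end MA

section Quad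
variable {A B : Type*} [Ring A] [Algebra k A] [Ring B] [Algebra k B]

/-- The two-sided ideal generated by a set, as an `Ideal` (it is
two-sided by construction since the generating set is closed under outer products). -/
def twoSidedSpan {T : Type*} [Ring T] (S : Set T) : Ideal T :=
  Ideal.span {x | ∃ a s b, s ∈ S ∧ x = a * s * b}

/-- The embedding of `V ⊗ V` as the degree-two part of the tensor algebra `T(V)`. -/
def degTwoIncl (V : Submodule k A) : (V ⊗[k] V) →ₗ[k] TensorAlgebra k V :=
  LinearMap.mul' k (TensorAlgebra k V) ∘ₗ
    TensorProduct.map (TensorAlgebra.ι k) (TensorAlgebra.ι k)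

/-- `B` is presented, via the linear map `f : A → B`, as the quadratic algebra
`T(V)/(R)` on the subspace `V ⊆ A` with relations `R ⊆ V ⊗ V`: the canonical
algebra map `T(V) → B` induced by `f` is surjective with kernel the two-sided
ideal generated by `R`. -/
def IsQuadraticPresentation (V : Submodule k A) (f : A →ₗ[k] B)
    (R : Submodule k (V ⊗[k] V)) : Prop :=
  Function.Surjective (TensorAlgebra.lift k (f ∘ₗ V.subtype) : TensorAlgebra k V →ₐ[k] B) ∧
    RingHom.ker (TensorAlgebra.lift k (f ∘ₗ V.subtype) : TensorAlgebra k V →ₐ[k] B) =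
      twoSidedSpan ((degTwoIncl k V) '' (R : Set (V ⊗[k] V)))

/-- A quadratic algebra: a connected ℕ-graded, locally finite-dimensional `k`-algebra
`A`, generated by `V = 𝒜 1` with relations `R ⊆ V ⊗ V`, i.e. `A = T(V)/(R)`. -/
structure QuadraticAlgebra (𝒜 : ℕ → Submodule k A)
    (R : Submodule k ((𝒜 1) ⊗[k] (𝒜 1))) : Prop where
  graded : SetLike.GradedMonoid 𝒜
  internal : DirectSum.IsInternal 𝒜
  connected : 𝒜 0 = Submodule.span k {(1 : A)}
  locallyFinite : ∀ i, Module.Finite k (𝒜 i)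
  presentation : IsQuadraticPresentation k (𝒜 1) LinearMap.id R

end Quad

section Twist
variable {H : Type v} [Ring H] [HopfAlgebra k H]
variable {A B : Type u} [Ring A] [Algebra k A] [Ring B] [Algebra k B]

variable {k}

/-- The twisted space of relations `R_μ = { μ ▷ r | r ∈ R } ⊆ V ⊗ V`, where `H ⊗ H` acts
componentwise on `A ⊗ A` (this is a subspace of `V ⊗ V` whenever the `H`-action is
degree-preserving). -/
def ModuleAlgebra.relTwist (ma : ModuleAlgebra k H A) (μ : H ⊗[k] H)
    (V : Submodule k A) (R : Submodule k (V ⊗[k] V)) : Submodule k (V ⊗[k] V) :=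
  Submodule.comap (TensorProduct.map V.subtype V.subtype)
    (Submodule.map (ma.act2 μ)
      (Submodule.map (TensorProduct.map V.subtype V.subtype) R))

/-- `B`, together with the linear equivalence `e : A ≃ B`, is the Drinfeld twist of the
`H`-module algebra `A` by the 2-cocycle with inverse `μinv`: `B` has the same underlying
vector space as `A`, the same unit, and product `m_μ(a ⊗ b) = m(μ⁻¹ ▷ (a ⊗ b))`. -/
structure IsDrinfeldTwist (ma : ModuleAlgebra k H A) (μinv : H ⊗[k] H)
    (e : A ≃ₗ[k] B) : Prop where
  map_one : e 1 = 1
  map_mul : ∀ a b : A, e a * e b = e (ma.twProd μinv (a ⊗ₜ[k] b))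

end Twist

end DrinfeldTwist

namespace DrinfeldTwist
open TensorProduct

section General

variable {k : Type u} [CommRing k] {H : Type v} [Ring H] [HopfAlgebra k H]
  {A : Type u} [Ring A] [Algebra k A]

/-! ### Tensor products of subspaces inside `A ⊗ A` -/

/-- The image of `X ⊗ Y` in `A ⊗ A`. -/
def tensorSub (X Y : Submodule k A) : Submodule k (A ⊗[k] A) :=
  LinearMap.range (TensorProduct.map X.subtype Y.subtype)

lemma tmul_mem_tensorSub {X Y : Submodule k A} {x y : A} (hx : x ∈ X) (hy : y ∈ Y) :
    x ⊗ₜ[k] y ∈ tensorSub X Y :=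
  ⟨⟨x, hx⟩ ⊗ₜ ⟨y, hy⟩, rfl⟩

lemma tensorSub_le {X Y : Submodule k A} {N : Submodule k (A ⊗[k] A)}
    (h : ∀ x ∈ X, ∀ y ∈ Y, x ⊗ₜ[k] y ∈ N) : tensorSub X Y ≤ N := by
  rintro _ ⟨z, rfl⟩
  induction z with
  | zero => simp
  | tmul x y => exact h _ x.2 _ y.2
  | add a b ha hb => rw [map_add]; exact N.add_mem ha hb

lemma map_mul'_tensorSub (X Y : Submodule k A) :
    (tensorSub X Y).map (LinearMap.mul' k A) = X * Y := by
  apply le_antisymm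
  · rw [Submodule.map_le_iff_le_comap]
    refine tensorSub_le fun x hx y hy => ?_
    simpa using Submodule.mul_mem_mul hx hy
  · rw [Submodule.mul_le]
    intro x hx y hy
    exact ⟨x ⊗ₜ y, tmul_mem_tensorSub hx hy, by simp⟩

lemma map_map_tensorSub {B : Type u} [Ring B] [Algebra k B] (f : A →ₗ[k] B)
    (X Y : Submodule k A) :
    (tensorSub X Y).map (TensorProduct.map f f) = tensorSub (X.map f) (Y.map f) := by
  apply le_antisymm
  · rw [Submodule.map_le_iff_le_comap]
    refine tensorSub_le fun x hx y hy => ?_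
    simpa using tmul_mem_tensorSub (Submodule.mem_map_of_mem hx) (Submodule.mem_map_of_mem hy)
  · apply tensorSub_le
    rintro _ ⟨x, hx, rfl⟩ _ ⟨y, hy, rfl⟩
    exact ⟨x ⊗ₜ y, tmul_mem_tensorSub hx hy, by simp⟩

/-! ### Stable subspaces of a module algebra -/

@[simp] lemma tensorEnd_tmul {M N : Type*} [AddCommGroup M] [Module k M] [AddCommGroup N]
    [Module k N] (f : Module.End k M) (g : Module.End k N) :
    tensorEnd k (f ⊗ₜ[k] g) = TensorProduct.map f g := rfl

namespace ModuleAlgebra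

variable (ma : ModuleAlgebra k H A)

@[simp] lemma act2_tmul (h g : H) (a b : A) :
    ma.act2 (h ⊗ₜ g) (a ⊗ₜ b) = ma.act h a ⊗ₜ ma.act g b := rfl

@[simp] lemma twProd_apply (x : H ⊗[k] H) (s : A ⊗[k] A) :
    ma.twProd x s = LinearMap.mul' k A (ma.act2 x s) := rfl

lemma act_mul' (h : H) (s : A ⊗[k] A) :
    ma.act h (LinearMap.mul' k A s) =
      LinearMap.mul' k A (ma.act2 (Coalgebra.comul (R := k) h) s) := by
  induction s with
  | zero => simp
  | tmul a b => exact ma.act_mul h a b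
  | add a b ha hb => simp only [map_add, ha, hb]

/-- The subspace `X` of `A` is an `H`-submodule. -/
def Stable (X : Submodule k A) : Prop := ∀ h, ∀ x ∈ X, ma.act h x ∈ X

variable {ma}

lemma Stable.act2_mem {X Y : Submodule k A} (hX : ma.Stable X) (hY : ma.Stable Y)
    (x : H ⊗[k] H) {s : A ⊗[k] A} (hs : s ∈ tensorSub X Y) : ma.act2 x s ∈ tensorSub X Y := by
  induction x with
  | zero => simp
  | tmul h g =>
    suffices tensorSub X Y ≤ (tensorSub X Y).comap (ma.act2 (h ⊗ₜ g)) from this hs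
    exact tensorSub_le fun a ha b hb => tmul_mem_tensorSub (hX h a ha) (hY g b hb)
  | add a b ha hb => rw [map_add]; exact Submodule.add_mem _ ha hb

lemma Stable.mul {X Y : Submodule k A} (hX : ma.Stable X) (hY : ma.Stable Y) :
    ma.Stable (X * Y) := by
  intro h z hz
  rw [← map_mul'_tensorSub] at hz ⊢
  obtain ⟨s, hs, rfl⟩ := hz
  rw [act_mul']
  exact Submodule.mem_map_of_mem (hX.act2_mem hY _ hs)

lemma stable_top : ma.Stable ⊤ := fun _ _ _ => trivial

lemma stable_one : ma.Stable (1 : Submodule k A) := by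
  intro h x hx
  obtain ⟨r, rfl⟩ := Submodule.mem_one.1 hx
  rw [Algebra.algebraMap_eq_smul_one, map_smul, ma.act_one, smul_smul,
    ← Algebra.algebraMap_eq_smul_one]
  exact Submodule.mem_one.2 ⟨_, rfl⟩

lemma Stable.pow {X : Submodule k A} (hX : ma.Stable X) (n : ℕ) : ma.Stable (X ^ n) := by
  induction n with
  | zero => rw [pow_zero]; exact stable_one
  | succ n ih => rw [pow_succ]; exact ih.mul hX

lemma Stable.inf {X Y : Submodule k A} (hX : ma.Stable X) (hY : ma.Stable Y) :
    ma.Stable (X ⊓ Y) := fun h x hx => ⟨hX h x hx.1, hY h x hx.2⟩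

/-- On `H`-submodules the twisted product has the same span as the original one, because an
invertible element of `H ⊗ H` permutes `X ⊗ Y`. -/
lemma Stable.map_twProd {X Y : Submodule k A} (hX : ma.Stable X) (hY : ma.Stable Y)
    {x y : H ⊗[k] H} (hxy : x * y = 1) :
    (tensorSub X Y).map (ma.twProd x) = X * Y := by
  rw [← map_mul'_tensorSub]
  apply le_antisymm
  · rintro _ ⟨s, hs, rfl⟩
    exact ⟨_, hX.act2_mem hY x hs, rfl⟩
  · rintro _ ⟨s, hs, rfl⟩
    refine ⟨_, hX.act2_mem hY y hs, ?_⟩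
    rw [twProd_apply, ← Module.End.mul_apply, ← map_mul, hxy, map_one, Module.End.one_apply]

/-! ### The twisted product is associative and unital -/

variable (ma)

/-- The componentwise action of `H ⊗ H ⊗ H` on `A ⊗ A ⊗ A`. -/
def act3 : H ⊗[k] (H ⊗[k] H) →ₐ[k] Module.End k (A ⊗[k] (A ⊗[k] A)) :=
  (tensorEnd k).comp (Algebra.TensorProduct.map ma.act ma.act2)

@[simp] lemma act3_tmul (h : H) (x : H ⊗[k] H) (a : A) (s : A ⊗[k] A) :
    ma.act3 (h ⊗ₜ x) (a ⊗ₜ s) = ma.act h a ⊗ₜ ma.act2 x s := rfl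

variable (k A) in
/-- The triple product `a ⊗ b ⊗ c ↦ a * b * c`. -/
def mul3 : A ⊗[k] (A ⊗[k] A) →ₗ[k] A :=
  LinearMap.mul' k A ∘ₗ TensorProduct.map LinearMap.id (LinearMap.mul' k A)

@[simp] lemma mul3_tmul (a : A) (s : A ⊗[k] A) :
    mul3 k A (a ⊗ₜ s) = a * LinearMap.mul' k A s := rfl

lemma mul_act2_mul (d : H ⊗[k] H) (g : H) (s : A ⊗[k] A) (c : A) :
    LinearMap.mul' k A (ma.act2 d s) * ma.act g c =
      mul3 k A (ma.act3 (TensorProduct.assoc k H H H (d ⊗ₜ g))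
        (TensorProduct.assoc k A A A (s ⊗ₜ c))) := by
  induction d with
  | zero => simp
  | add x y hx hy => simp only [map_add, LinearMap.add_apply, add_mul, hx, hy, add_tmul]
  | tmul h h' =>
    induction s with
    | zero => simp
    | add x y hx hy => simp only [map_add, add_mul, hx, hy, add_tmul]
    | tmul a b => simp [mul_assoc]

lemma twProd_mul'_left (x : H ⊗[k] H) (s : A ⊗[k] A) (c : A) :
    ma.twProd x (LinearMap.mul' k A s ⊗ₜ c) =
      mul3 k A (ma.act3 (comulLeft k H x) (TensorProduct.assoc k A A A (s ⊗ₜ c))) := by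
  induction x with
  | zero => simp
  | add x y hx hy => simp only [twProd_apply, map_add, LinearMap.add_apply] at *; rw [hx, hy]
  | tmul h g =>
    rw [twProd_apply, act2_tmul, act_mul', LinearMap.mul'_apply, mul_act2_mul]
    rfl

lemma twProd_mul'_right (x : H ⊗[k] H) (a : A) (s : A ⊗[k] A) :
    ma.twProd x (a ⊗ₜ LinearMap.mul' k A s) =
      mul3 k A (ma.act3 (comulRight k H x) (a ⊗ₜ s)) := by
  induction x with
  | zero => simp
  | add x y hx hy => simp only [twProd_apply, map_add, LinearMap.add_apply] at *; rw [hx, hy]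
  | tmul h g =>
    rw [twProd_apply, act2_tmul, act_mul', LinearMap.mul'_apply]
    rfl

lemma act3_incl12 (x : H ⊗[k] H) (s : A ⊗[k] A) (c : A) :
    ma.act3 (incl12 k H x) (TensorProduct.assoc k A A A (s ⊗ₜ c)) =
      TensorProduct.assoc k A A A (ma.act2 x s ⊗ₜ c) := by
  induction x with
  | zero => simp
  | add x y hx hy => simp only [map_add, LinearMap.add_apply, add_tmul, hx, hy]
  | tmul h g =>
    induction s with
    | zero => simp
    | add x y hx hy => simp only [map_add, add_tmul, hx, hy]
    | tmul a b => simp [incl12]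

lemma act3_incl23 (x : H ⊗[k] H) (a : A) (s : A ⊗[k] A) :
    ma.act3 (incl23 k H x) (a ⊗ₜ s) = a ⊗ₜ ma.act2 x s := by
  simp [incl23]

variable (k H) in
lemma comulLeft_eq (x : H ⊗[k] H) : comulLeft k H x =
    (Algebra.TensorProduct.assoc k k k H H H).toAlgHom.comp
      (Algebra.TensorProduct.map (Bialgebra.comulAlgHom k H) (AlgHom.id k H)) x := rfl

variable (k H) in
lemma comulRight_eq (x : H ⊗[k] H) : comulRight k H x =
    Algebra.TensorProduct.map (AlgHom.id k H) (Bialgebra.comulAlgHom k H) x := rfl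

variable (k H) in
lemma counitLeft_eq (x : H ⊗[k] H) : counitLeft k H x =
    (Algebra.TensorProduct.lid k H).toAlgHom.comp
      (Algebra.TensorProduct.map (Bialgebra.counitAlgHom k H) (AlgHom.id k H)) x := rfl

variable (k H) in
lemma counitRight_eq (x : H ⊗[k] H) : counitRight k H x =
    (Algebra.TensorProduct.rid k k H).toAlgHom.comp
      (Algebra.TensorProduct.map (AlgHom.id k H) (Bialgebra.counitAlgHom k H)) x := rfl

end ModuleAlgebra

open ModuleAlgebra

variable {μ μinv : H ⊗[k] H}

/-- The cocycle identity for the inverse. -/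
lemma IsCounitalCocycle.inv_cocycle (hμ : IsCounitalCocycle μ μinv) :
    comulLeft k H μinv * incl12 k H μinv = comulRight k H μinv * incl23 k H μinv := by
  refine left_inv_eq_right_inv (a := incl12 k H μ * comulLeft k H μ) ?_ ?_
  · rw [mul_assoc, ← mul_assoc (incl12 k H μinv), ← map_mul, hμ.inv_mul, map_one, one_mul,
      comulLeft_eq, comulLeft_eq, ← map_mul, hμ.inv_mul, map_one]
  · rw [hμ.cocycle, mul_assoc, ← mul_assoc (comulRight k H μ), comulRight_eq, comulRight_eq,
      ← map_mul, hμ.mul_inv, map_one, one_mul, ← map_mul, hμ.mul_inv, map_one]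

lemma IsCounitalCocycle.inv_counit_left (hμ : IsCounitalCocycle μ μinv) :
    counitLeft k H μinv = 1 := by
  have h := hμ.counit_left
  rw [counitLeft_eq] at h ⊢
  rw [← mul_one (AlgHom.comp _ _ _), ← h, ← map_mul, hμ.inv_mul, map_one, h]

lemma IsCounitalCocycle.inv_counit_right (hμ : IsCounitalCocycle μ μinv) :
    counitRight k H μinv = 1 := by
  have h := hμ.counit_right
  rw [counitRight_eq] at h ⊢
  rw [← mul_one (AlgHom.comp _ _ _), ← h, ← map_mul, hμ.inv_mul, map_one, h]

namespace ModuleAlgebra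

variable (ma : ModuleAlgebra k H A)

lemma twProd_one_left (hμ : IsCounitalCocycle μ μinv) (a : A) :
    ma.twProd μinv (1 ⊗ₜ a) = a := by
  have key : ∀ x : H ⊗[k] H, ma.twProd x (1 ⊗ₜ a) = ma.act (counitLeft k H x) a := by
    intro x
    induction x with
    | zero => simp
    | add x y hx hy => simp only [twProd_apply, map_add, LinearMap.add_apply] at *; rw [hx, hy]
    | tmul h g => simp [ma.act_one, counitLeft]
  rw [key, hμ.inv_counit_left, map_one, Module.End.one_apply]

lemma twProd_one_right (hμ : IsCounitalCocycle μ μinv) (a : A) :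
    ma.twProd μinv (a ⊗ₜ 1) = a := by
  have key : ∀ x : H ⊗[k] H, ma.twProd x (a ⊗ₜ 1) = ma.act (counitRight k H x) a := by
    intro x
    induction x with
    | zero => simp
    | add x y hx hy => simp only [twProd_apply, map_add, LinearMap.add_apply] at *; rw [hx, hy]
    | tmul h g => simp [ma.act_one, counitRight]
  rw [key, hμ.inv_counit_right, map_one, Module.End.one_apply]

/-- The cocycle identity makes the twisted product associative. -/
lemma twProd_assoc (hμ : IsCounitalCocycle μ μinv) (a b c : A) :
    ma.twProd μinv (ma.twProd μinv (a ⊗ₜ b) ⊗ₜ c) =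
      ma.twProd μinv (a ⊗ₜ ma.twProd μinv (b ⊗ₜ c)) := by
  rw [twProd_apply ma μinv (a ⊗ₜ b), twProd_apply ma μinv (b ⊗ₜ c), twProd_mul'_left,
    twProd_mul'_right, ← act3_incl12, ← act3_incl23, TensorProduct.assoc_tmul,
    ← Module.End.mul_apply, ← Module.End.mul_apply, ← map_mul, ← map_mul, hμ.inv_cocycle]

end ModuleAlgebra

end General

end DrinfeldTwist
namespace DrinfeldTwist
open TensorProduct

section TensorAction

variable {k : Type u} [CommRing k] {H : Type v} [Ring H] [HopfAlgebra k H]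
  {V : Type u} [AddCommGroup V] [Module k V]

/-! ### The module algebra structure on the tensor algebra -/

section Action

variable (α : H →ₐ[k] Module.End k V)

/-- The algebra map from `T(V)` to the convolution algebra of linear maps `H → T(V)` extending
`v ↦ (h ↦ h ▷ v)`. Being multiplicative for convolution is exactly the module algebra condition. -/
def convAction : TensorAlgebra k V →ₐ[k] WithConv (H →ₗ[k] TensorAlgebra k V) :=
  TensorAlgebra.lift k ((WithConv.linearEquiv k _).symm.toLinearMap ∘ₗ
    LinearMap.compr₂ α.toLinearMap.flip (TensorAlgebra.ι k))

/-- The action of `H` on `T(V)`, as a linear map. -/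
def actLin : H →ₗ[k] Module.End k (TensorAlgebra k V) :=
  ((WithConv.linearEquiv k _).toLinearMap ∘ₗ (convAction α).toLinearMap).flip

lemma actLin_ι (h : H) (v : V) :
    actLin α h (TensorAlgebra.ι k v) = TensorAlgebra.ι k (α h v) := by
  change (convAction α (TensorAlgebra.ι k v)).ofConv h = _
  rw [convAction, TensorAlgebra.lift_ι_apply]
  rfl

lemma actLin_algebraMap (h : H) (r : k) :
    actLin α h (algebraMap k _ r) = Coalgebra.counit (R := k) h • algebraMap k _ r := by
  change (convAction α (algebraMap k _ r)).ofConv h = _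
  rw [AlgHom.commutes, Algebra.algebraMap_eq_smul_one, Algebra.algebraMap_eq_smul_one,
    WithConv.ofConv_smul, LinearMap.smul_apply, LinearMap.convOne_apply,
    Algebra.algebraMap_eq_smul_one, smul_comm]

/-- The componentwise action of `H ⊗ H` on `T(V) ⊗ T(V)`, as a linear map. -/
def actLin2 : H ⊗[k] H →ₗ[k] Module.End k (TensorAlgebra k V ⊗[k] TensorAlgebra k V) :=
  (tensorEnd k).toLinearMap ∘ₗ TensorProduct.map (actLin α) (actLin α)

@[simp] lemma actLin2_tmul (h g : H) (a b : TensorAlgebra k V) :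
    actLin2 α (h ⊗ₜ g) (a ⊗ₜ b) = actLin α h a ⊗ₜ actLin α g b := rfl

lemma actLin_mul (h : H) (a b : TensorAlgebra k V) :
    actLin α h (a * b) = LinearMap.mul' k _
      (actLin2 α (Coalgebra.comul (R := k) h) (a ⊗ₜ b)) := by
  have key : ∀ d : H ⊗[k] H, TensorProduct.map (convAction α a).ofConv (convAction α b).ofConv d =
      actLin2 α d (a ⊗ₜ b) := by
    intro d
    induction d with
    | zero => simp
    | add x y hx hy => simp only [map_add, LinearMap.add_apply, hx, hy]
    | tmul h g => rfl
  change (convAction α (a * b)).ofConv h = _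
  rw [map_mul, LinearMap.convMul_apply, key]

lemma actLin_mul' (h : H) (s : TensorAlgebra k V ⊗[k] TensorAlgebra k V) :
    actLin α h (LinearMap.mul' k _ s) = LinearMap.mul' k _
      (actLin2 α (Coalgebra.comul (R := k) h) s) := by
  induction s with
  | zero => simp
  | add x y hx hy => simp only [map_add, hx, hy]
  | tmul a b => exact actLin_mul α h a b

lemma actLin_one (t : TensorAlgebra k V) : actLin α 1 t = t := by
  induction t using TensorAlgebra.induction with
  | algebraMap r => rw [actLin_algebraMap, Bialgebra.counit_one, one_smul]
  | ι v => rw [actLin_ι, map_one, Module.End.one_apply]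
  | mul a b ha hb =>
    rw [actLin_mul, Bialgebra.comul_one, Algebra.TensorProduct.one_def, actLin2_tmul, ha, hb,
      LinearMap.mul'_apply]
  | add a b ha hb => rw [map_add, ha, hb]

lemma actLin_mul_apply (t : TensorAlgebra k V) :
    ∀ h g : H, actLin α (h * g) t = actLin α h (actLin α g t) := by
  induction t using TensorAlgebra.induction with
  | algebraMap r =>
    intro h g
    rw [actLin_algebraMap, actLin_algebraMap, map_smul, actLin_algebraMap, Bialgebra.counit_mul,
      mul_comm, mul_smul]
  | ι v => intro h g; rw [actLin_ι, actLin_ι, actLin_ι, map_mul, Module.End.mul_apply]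
  | mul a b ha hb =>
    intro h g
    have key : ∀ d d' : H ⊗[k] H,
        actLin2 α (d * d') (a ⊗ₜ b) = actLin2 α d (actLin2 α d' (a ⊗ₜ b)) := by
      intro d d'
      induction d with
      | zero => simp
      | add x y hx hy => simp only [add_mul, map_add, LinearMap.add_apply, hx, hy]
      | tmul h g =>
        induction d' with
        | zero => simp
        | add x y hx hy => simp only [mul_add, map_add, LinearMap.add_apply, hx, hy]
        | tmul h' g' =>
          rw [Algebra.TensorProduct.tmul_mul_tmul, actLin2_tmul, actLin2_tmul, actLin2_tmul,
            ha, hb]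
    rw [actLin_mul, Bialgebra.comul_mul, key, ← actLin_mul', ← actLin_mul]
  | add a b ha hb => intro h g; simp only [map_add, ha, hb]

/-- The `H`-module algebra structure on `T(V)` extending the `H`-module `V`. -/
def tensorModuleAlgebra : ModuleAlgebra k H (TensorAlgebra k V) where
  act := AlgHom.ofLinearMap (actLin α) (LinearMap.ext (actLin_one α))
    fun h g => LinearMap.ext fun t => actLin_mul_apply α t h g
  act_mul h a b := actLin_mul α h a b
  act_one h := by
    have := actLin_algebraMap α h 1
    rwa [map_one] at this

lemma tensorModuleAlgebra_act_ι (h : H) (v : V) :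
    (tensorModuleAlgebra α).act h (TensorAlgebra.ι k v) = TensorAlgebra.ι k (α h v) :=
  actLin_ι α h v

lemma stable_range_ι :
    (tensorModuleAlgebra α).Stable (LinearMap.range (TensorAlgebra.ι k (M := V))) := by
  rintro h _ ⟨v, rfl⟩
  exact ⟨α h v, (tensorModuleAlgebra_act_ι α h v).symm⟩

end Action

/-! ### The comparison map from the tensor algebra to its twist -/

variable (ma : ModuleAlgebra k H (TensorAlgebra k V)) (μ μinv : H ⊗[k] H)

/-- Left multiplication for the twisted product. -/
def twLeft : TensorAlgebra k V →ₗ[k] Module.End k (TensorAlgebra k V) :=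
  TensorProduct.curry (ma.twProd μinv)

@[simp] lemma twLeft_apply (a b : TensorAlgebra k V) :
    twLeft ma μinv a b = ma.twProd μinv (a ⊗ₜ b) := rfl

/-- The left regular representation of the twisted tensor algebra, pulled back to `T(V)`. -/
def twRep : TensorAlgebra k V →ₐ[k] Module.End k (TensorAlgebra k V) :=
  TensorAlgebra.lift k (twLeft ma μinv ∘ₗ TensorAlgebra.ι k)

/-- The algebra map from `T(V)` to the twist `T(V)_μ` that is the identity on `V`, viewed as a
linear endomorphism of `T(V)`. It is obtained by letting `T(V)` act on `1` through the left
regular representation of the twist. -/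
def twistMap : TensorAlgebra k V →ₗ[k] TensorAlgebra k V :=
  LinearMap.applyₗ (1 : TensorAlgebra k V) ∘ₗ (twRep ma μinv).toLinearMap

variable {μ μinv}

lemma twRep_eq (hμ : IsCounitalCocycle μ μinv) (t : TensorAlgebra k V) :
    twRep ma μinv t = twLeft ma μinv (twistMap ma μinv t) := by
  have hψ : ∀ t, twistMap ma μinv t = twRep ma μinv t 1 := fun _ => rfl
  induction t using TensorAlgebra.induction with
  | algebraMap r =>
    rw [hψ, AlgHom.commutes, Algebra.algebraMap_eq_smul_one, LinearMap.smul_apply,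
      Module.End.one_apply, map_smul]
    congr 1
    ext1 t
    rw [twLeft_apply, ma.twProd_one_left hμ, Module.End.one_apply]
  | ι v =>
    rw [hψ, twRep, TensorAlgebra.lift_ι_apply, LinearMap.comp_apply, twLeft_apply,
      ma.twProd_one_right hμ]
  | mul a b ha hb =>
    rw [hψ, map_mul, ha, hb]
    ext1 t
    simp only [Module.End.mul_apply, twLeft_apply]
    rw [ma.twProd_one_right hμ, ma.twProd_assoc hμ]
  | add a b ha hb => simp only [map_add, ha, hb]

lemma twistMap_mul (hμ : IsCounitalCocycle μ μinv) (a b : TensorAlgebra k V) :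
    twistMap ma μinv (a * b) =
      ma.twProd μinv (twistMap ma μinv a ⊗ₜ twistMap ma μinv b) := by
  change twRep ma μinv (a * b) 1 = _
  rw [map_mul, Module.End.mul_apply, twRep_eq ma hμ a, twLeft_apply]
  rfl

lemma twistMap_algebraMap (r : k) :
    twistMap ma μinv (algebraMap k _ r) = algebraMap k _ r := by
  change twRep ma μinv (algebraMap k _ r) 1 = _
  rw [AlgHom.commutes, Algebra.algebraMap_eq_smul_one, LinearMap.smul_apply,
    Module.End.one_apply, Algebra.algebraMap_eq_smul_one]

lemma twistMap_ι (hμ : IsCounitalCocycle μ μinv) (v : V) :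
    twistMap ma μinv (TensorAlgebra.ι k v) = TensorAlgebra.ι k v := by
  change twRep ma μinv (TensorAlgebra.ι k v) 1 = _
  rw [twRep, TensorAlgebra.lift_ι_apply, LinearMap.comp_apply, twLeft_apply,
    ma.twProd_one_right hμ]

lemma twistMap_mul' (hμ : IsCounitalCocycle μ μinv)
    (s : TensorAlgebra k V ⊗[k] TensorAlgebra k V) :
    twistMap ma μinv (LinearMap.mul' k _ s) =
      ma.twProd μinv (TensorProduct.map (twistMap ma μinv) (twistMap ma μinv) s) := by
  induction s with
  | zero => simp
  | add x y hx hy => simp only [map_add, hx, hy]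
  | tmul a b => exact twistMap_mul ma hμ a b

/-- The comparison map is multiplicative on subspaces, for the untwisted product, as long as
the images are `H`-submodules. -/
lemma map_twistMap_mul (hμ : IsCounitalCocycle μ μinv) {X Y : Submodule k (TensorAlgebra k V)}
    (hX : ma.Stable (X.map (twistMap ma μinv))) (hY : ma.Stable (Y.map (twistMap ma μinv))) :
    (X * Y).map (twistMap ma μinv) =
      X.map (twistMap ma μinv) * Y.map (twistMap ma μinv) := by
  rw [← hX.map_twProd hY hμ.inv_mul, ← map_map_tensorSub, ← map_mul'_tensorSub,
    ← Submodule.map_comp, ← Submodule.map_comp]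
  congr 1
  exact LinearMap.ext fun s => twistMap_mul' ma hμ s

lemma map_twistMap_pow (hμ : IsCounitalCocycle μ μinv)
    (hE : ma.Stable (LinearMap.range (TensorAlgebra.ι k (M := V)))) (n : ℕ) :
    (LinearMap.range (TensorAlgebra.ι k (M := V)) ^ n).map (twistMap ma μinv) =
      LinearMap.range (TensorAlgebra.ι k (M := V)) ^ n := by
  have h1 : (LinearMap.range (TensorAlgebra.ι k (M := V))).map (twistMap ma μinv) =
      LinearMap.range (TensorAlgebra.ι k (M := V)) := by
    rw [← LinearMap.range_comp]
    congr 1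
    exact LinearMap.ext fun v => twistMap_ι ma hμ v
  induction n with
  | zero =>
    rw [pow_zero, Submodule.one_eq_range, ← LinearMap.range_comp]
    congr 1
    exact LinearMap.ext fun r => twistMap_algebraMap ma r
  | succ n ih =>
    rw [pow_succ, map_twistMap_mul ma hμ (by rw [ih]; exact hE.pow n) (by rw [h1]; exact hE),
      ih, h1]

lemma twistMap_surjective (hμ : IsCounitalCocycle μ μinv)
    (hE : ma.Stable (LinearMap.range (TensorAlgebra.ι k (M := V)))) :
    Function.Surjective (twistMap ma μinv) := by
  intro x
  induction x using DirectSum.Decomposition.inductionOn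
    (LinearMap.range (TensorAlgebra.ι k (M := V)) ^ ·) with
  | zero => exact ⟨0, map_zero _⟩
  | @homogeneous i m =>
    obtain ⟨y, -, hy⟩ := (map_twistMap_pow ma hμ hE i).ge m.2
    exact ⟨y, hy⟩
  | add a b ha hb =>
    obtain ⟨x, rfl⟩ := ha
    obtain ⟨y, rfl⟩ := hb
    exact ⟨x + y, map_add _ _ _⟩

end TensorAction

section Field

variable {k : Type u} [Field k] {H : Type v} [Ring H] [HopfAlgebra k H]
  {V : Type u} [AddCommGroup V] [Module k V]

/-- The comparison map restricts to a surjective endomorphism of each graded piece of `T(V)`,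
and these pieces are finite-dimensional. -/
lemma twistMap_injective [Module.Finite k V] (ma : ModuleAlgebra k H (TensorAlgebra k V))
    {μ μinv : H ⊗[k] H} (hμ : IsCounitalCocycle μ μinv)
    (hE : ma.Stable (LinearMap.range (TensorAlgebra.ι k (M := V)))) :
    Function.Injective (twistMap ma μinv) := by
  set E := LinearMap.range (TensorAlgebra.ι k (M := V)) with hEdef
  have hmap := map_twistMap_pow ma hμ hE
  have hmem : ∀ n, ∀ x ∈ E ^ n, twistMap ma μinv x ∈ E ^ n := fun n x hx => by
    have := Submodule.mem_map_of_mem (f := twistMap ma μinv) hx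
    rwa [hmap] at this
  have hinj : ∀ n, ∀ x ∈ E ^ n, twistMap ma μinv x = 0 → x = 0 := by
    intro n x hx h0
    have hfin : Module.Finite k ↥(E ^ n) := by
      rw [Module.Finite.iff_fg]
      refine Submodule.FG.pow ?_ n
      rw [hEdef, LinearMap.range_eq_map]
      exact Module.Finite.fg_top.map _
    have hs : Function.Surjective ((twistMap ma μinv).restrict (hmem n)) := by
      rintro ⟨y, hy⟩
      rw [← hmap n] at hy
      obtain ⟨z, hz, rfl⟩ := hy
      exact ⟨⟨z, hz⟩, rfl⟩
    have hi := LinearMap.injective_iff_surjective.2 hs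
    have : (⟨x, hx⟩ : ↥(E ^ n)) = 0 := hi (by rw [map_zero]; exact Subtype.ext h0)
    exact congrArg Subtype.val this
  have hdec : ∀ x i, (DirectSum.decompose (E ^ ·) (twistMap ma μinv x) i : TensorAlgebra k V) =
      twistMap ma μinv (DirectSum.decompose (E ^ ·) x i) := by
    intro x i
    induction x using DirectSum.Decomposition.inductionOn (E ^ ·) with
    | zero => simp
    | @homogeneous j m =>
      by_cases hij : j = i
      · subst hij
        rw [DirectSum.decompose_of_mem_same _ (hmem _ _ m.2),
          DirectSum.decompose_of_mem_same _ m.2]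
      · rw [DirectSum.decompose_of_mem_ne _ (hmem _ _ m.2) hij,
          DirectSum.decompose_of_mem_ne _ m.2 hij, map_zero]
    | add a b ha hb =>
      simp only [map_add, DirectSum.decompose_add, DirectSum.add_apply, Submodule.coe_add, ha, hb]
  rw [injective_iff_map_eq_zero]
  intro x hx
  have h0 : DirectSum.decompose (E ^ ·) x = 0 := by
    refine DFinsupp.ext fun i => Subtype.ext ?_
    refine hinj i _ (SetLike.coe_mem _) ?_
    rw [← hdec, hx]
    simp
  exact (DirectSum.decompose (E ^ ·)).injective (by rw [h0, DirectSum.decompose_zero])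

end Field

/-! ### Ideals of relations -/

section Ideals

variable {k : Type u} [CommRing k] {V : Type u} [AddCommGroup V] [Module k V]

/-- The ideal generated by a space `P` of quadratic relations is `P` in degree two. -/
lemma mem_of_mem_ideal_of_degree_two {P : Submodule k (TensorAlgebra k V)}
    (hP : P ≤ LinearMap.range (TensorAlgebra.ι k (M := V)) ^ 2) {x : TensorAlgebra k V}
    (hx : x ∈ (⊤ : Submodule k (TensorAlgebra k V)) * P * ⊤)
    (hx2 : x ∈ LinearMap.range (TensorAlgebra.ι k (M := V)) ^ 2) : x ∈ P := by
  set E := LinearMap.range (TensorAlgebra.ι k (M := V)) with hEdef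
  suffices h : (⊤ : Submodule k (TensorAlgebra k V)) * P * ⊤ ≤
      P.comap (GradedAlgebra.proj (E ^ ·) 2) by
    have := h hx
    rwa [Submodule.mem_comap, GradedAlgebra.proj_apply,
      DirectSum.decompose_of_mem_same _ hx2] at this
  rw [Submodule.mul_le]
  intro y hy b _
  revert y
  suffices ⊤ * P ≤ (P.comap (GradedAlgebra.proj (E ^ ·) 2)).comap (LinearMap.mulRight k b) from
    fun y hy => this hy
  rw [Submodule.mul_le]
  intro a _ r hr
  rw [Submodule.mem_comap, LinearMap.mulRight_apply]
  induction a using DirectSum.Decomposition.inductionOn (E ^ ·) with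
  | zero => simp
  | add a a' ha ha' => rw [add_mul, add_mul]; exact add_mem (ha trivial) (ha' trivial)
  | @homogeneous i m =>
    have hmr : (m : TensorAlgebra k V) * r ∈ E ^ (i + 2) := by
      rw [pow_add]; exact Submodule.mul_mem_mul m.2 (hP hr)
    rw [Submodule.mem_comap, GradedAlgebra.proj_apply]
    by_cases hi : i = 0
    · subst hi
      rw [DirectSum.coe_decompose_mul_of_left_mem_of_le (E ^ ·) hmr (by simp)]
      obtain ⟨c, hc⟩ := Submodule.mem_one.1 ((pow_zero E).le m.2)
      obtain ⟨d, hd⟩ := Submodule.mem_one.1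
        ((pow_zero E).le (DirectSum.decompose (E ^ ·) b (2 - (0 + 2))).2)
      rw [← hc, ← hd, ← Algebra.smul_def, ← Algebra.commutes, ← Algebra.smul_def]
      exact P.smul_mem _ (P.smul_mem _ hr)
    · rw [DirectSum.coe_decompose_mul_of_left_mem_of_not_le (E ^ ·) hmr (by omega)]
      exact zero_mem _

end Ideals

end DrinfeldTwist
namespace DrinfeldTwist
open TensorProduct

section Presentation

variable {k : Type u} [Field k] {H : Type v} [Ring H] [HopfAlgebra k H]
  {A B : Type u} [Ring A] [Algebra k A] [Ring B] [Algebra k B]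

lemma map_degTwoIncl_le (V : Submodule k A) (R : Submodule k (V ⊗[k] V)) :
    R.map (degTwoIncl k V) ≤ LinearMap.range (TensorAlgebra.ι k (M := V)) ^ 2 := by
  rintro _ ⟨r, -, rfl⟩
  rw [pow_two]
  induction r with
  | zero => simp
  | tmul v w => exact Submodule.mul_mem_mul ⟨v, rfl⟩ ⟨w, rfl⟩
  | add a b ha hb => rw [map_add]; exact add_mem ha hb

/-- The ideal of relations as a product of subspaces, to which `twistMap` can be applied. -/
lemma mem_relIdeal_iff (V : Submodule k A) (R : Submodule k (V ⊗[k] V))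
    (x : TensorAlgebra k V) :
    x ∈ twoSidedSpan (degTwoIncl k V '' (R : Set (V ⊗[k] V))) ↔
      x ∈ (⊤ : Submodule k (TensorAlgebra k V)) * R.map (degTwoIncl k V) * ⊤ := by
  constructor
  · intro hx
    refine Submodule.span_induction ?_ (zero_mem _) (fun _ _ _ _ => add_mem) ?_ hx
    · rintro _ ⟨a, s, b, hs, rfl⟩
      exact Submodule.mul_mem_mul (Submodule.mul_mem_mul trivial hs) trivial
    · intro a y _ hy
      have := Submodule.mul_mem_mul (show a ∈ (⊤ : Submodule k (TensorAlgebra k V)) from trivial) hy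
      rw [← mul_assoc, ← mul_assoc] at this
      have hle : ⊤ * ⊤ * R.map (degTwoIncl k V) * ⊤ ≤
          (⊤ : Submodule k (TensorAlgebra k V)) * R.map (degTwoIncl k V) * ⊤ := by
        gcongr
        exact le_top
      exact hle this
  · intro hx
    have : (⊤ : Submodule k (TensorAlgebra k V)) * R.map (degTwoIncl k V) * ⊤ ≤
        (twoSidedSpan (degTwoIncl k V '' (R : Set (V ⊗[k] V)))).restrictScalars k := by
      rw [mul_assoc, Submodule.mul_le]
      intro a _ y hy
      refine Ideal.mul_mem_left _ a ?_
      revert y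
      change R.map (degTwoIncl k V) * ⊤ ≤ (twoSidedSpan (degTwoIncl k V '' (R : Set (V ⊗[k] V)))).restrictScalars k
      rw [Submodule.mul_le]
      rintro r hr b -
      exact Ideal.subset_span ⟨1, r, b, hr, by rw [one_mul]⟩
    exact this hx

/-! ### Transport of a presentation along a linear equivalence -/

/-- A presentation with generators `V ⊆ A`, mapped to `B` by `e`, is a presentation with generators
`e(V) ⊆ B` and the relations carried along. -/
lemma IsQuadraticPresentation.transport (V : Submodule k A) (e : A ≃ₗ[k] B)
    (R : Submodule k (V ⊗[k] V)) (h : IsQuadraticPresentation k V e.toLinearMap R) :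
    IsQuadraticPresentation k (V.map e.toLinearMap) LinearMap.id
      (R.map (TensorProduct.map
        (Submodule.equivMapOfInjective e.toLinearMap e.injective V).toLinearMap
        (Submodule.equivMapOfInjective e.toLinearMap e.injective V).toLinearMap)) := by
  set ε := Submodule.equivMapOfInjective e.toLinearMap e.injective V with hε
  let Φ : TensorAlgebra k V ≃ₐ[k] TensorAlgebra k (V.map e.toLinearMap) :=
    AlgEquiv.ofAlgHom
      (TensorAlgebra.lift k (TensorAlgebra.ι k ∘ₗ ε.toLinearMap))
      (TensorAlgebra.lift k (TensorAlgebra.ι k ∘ₗ ε.symm.toLinearMap))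
      (by ext x; simp) (by ext x; simp)
  have hΦι : ∀ v, Φ (TensorAlgebra.ι k v) = TensorAlgebra.ι k (ε v) := fun v =>
    TensorAlgebra.lift_ι_apply _ _
  have hcomp : ∀ x, TensorAlgebra.lift k (LinearMap.id ∘ₗ (V.map e.toLinearMap).subtype) (Φ x) =
      TensorAlgebra.lift k (e.toLinearMap ∘ₗ V.subtype) x := by
    intro x
    rw [← AlgEquiv.coe_toAlgHom, ← AlgHom.comp_apply]
    congr 1
    ext v
    simp [hΦι, hε]
  have hdeg : ∀ r, degTwoIncl k (V.map e.toLinearMap)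
      (TensorProduct.map ε.toLinearMap ε.toLinearMap r) = Φ (degTwoIncl k V r) := by
    intro r
    induction r with
    | zero => simp
    | add a b ha hb => simp only [map_add, ha, hb]
    | tmul v w => simp [degTwoIncl, hΦι]
  have hrel : (R.map (TensorProduct.map ε.toLinearMap ε.toLinearMap)).map
      (degTwoIncl k (V.map e.toLinearMap)) =
        (R.map (degTwoIncl k V)).map Φ.toAlgHom.toLinearMap := by
    rw [← Submodule.map_comp, ← Submodule.map_comp]
    congr 1
    exact LinearMap.ext hdeg
  have htop : (⊤ : Submodule k (TensorAlgebra k V)).map Φ.toAlgHom.toLinearMap = ⊤ := by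
    rw [Submodule.map_top, LinearMap.range_eq_top]
    exact Φ.surjective
  obtain ⟨hsurj, hker⟩ := h
  refine ⟨fun b => ?_, ?_⟩
  · obtain ⟨x, rfl⟩ := hsurj b
    exact ⟨Φ x, hcomp x⟩
  · ext y
    obtain ⟨x, rfl⟩ := Φ.surjective y
    have hx : x ∈ RingHom.ker (TensorAlgebra.lift k (e.toLinearMap ∘ₗ V.subtype)) ↔ _ :=
      (SetLike.ext_iff.1 hker x).trans (mem_relIdeal_iff _ _ _)
    rw [mem_relIdeal_iff, RingHom.mem_ker, hcomp, ← RingHom.mem_ker, hx, hrel,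
      ← htop, ← Submodule.map_mul, ← Submodule.map_mul]
    constructor
    · intro h; exact ⟨x, h, rfl⟩
    · rintro ⟨z, hz, hzx⟩
      rwa [← Φ.injective hzx]

/-! ### The presentation of the twist -/

variable (ma : ModuleAlgebra k H A)

/-- The action of `H` on an `H`-submodule `V` of `A`. -/
def restrictAct (V : Submodule k A) (hV : ma.Stable V) : H →ₐ[k] Module.End k V where
  toFun h := (ma.act h).restrict (hV h)
  map_one' := by ext; simp
  map_mul' _ _ := by ext; simp
  map_zero' := by ext; simp
  map_add' _ _ := by ext; simp
  commutes' r := by ext; simp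

variable {V : Submodule k A} (hV : ma.Stable V)

/-- The canonical map `T(V) → A` is `H`-equivariant. -/
lemma lift_act (h : H) (t : TensorAlgebra k V) :
    TensorAlgebra.lift k (LinearMap.id ∘ₗ V.subtype)
      ((tensorModuleAlgebra (restrictAct ma V hV)).act h t) =
    ma.act h (TensorAlgebra.lift k (LinearMap.id ∘ₗ V.subtype) t) := by
  set p := TensorAlgebra.lift k (LinearMap.id ∘ₗ V.subtype) with hp
  set mt := tensorModuleAlgebra (restrictAct ma V hV) with hmt
  induction t using TensorAlgebra.induction generalizing h with
  | algebraMap r =>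
    rw [Algebra.algebraMap_eq_smul_one, map_smul (mt.act h), map_smul p, map_smul p,
      map_smul (ma.act h), mt.act_one, map_smul p, map_one p, ma.act_one]
  | ι v =>
    rw [tensorModuleAlgebra_act_ι, hp, TensorAlgebra.lift_ι_apply, TensorAlgebra.lift_ι_apply]
    rfl
  | mul a b ha hb =>
    have key : ∀ d : H ⊗[k] H, p (LinearMap.mul' k _ (mt.act2 d (a ⊗ₜ b))) =
        LinearMap.mul' k A (ma.act2 d (p a ⊗ₜ p b)) := by
      intro d
      induction d with
      | zero => simp
      | add x y hx hy => simp only [map_add, LinearMap.add_apply, hx, hy]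
      | tmul g g' => simp [ha, hb]
    rw [map_mul p, ← LinearMap.mul'_apply (R := k) (a := a), mt.act_mul', key,
      ← ma.act_mul', LinearMap.mul'_apply]
  | add a b ha hb => simp only [map_add, ha, hb]

lemma lift_twProd (x : H ⊗[k] H) (a b : TensorAlgebra k V) :
    TensorAlgebra.lift k (LinearMap.id ∘ₗ V.subtype)
      ((tensorModuleAlgebra (restrictAct ma V hV)).twProd x (a ⊗ₜ b)) =
    ma.twProd x (TensorAlgebra.lift k (LinearMap.id ∘ₗ V.subtype) a ⊗ₜ
      TensorAlgebra.lift k (LinearMap.id ∘ₗ V.subtype) b) := by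
  induction x with
  | zero => simp
  | add x y hx hy =>
    simp only [ModuleAlgebra.twProd_apply, map_add, LinearMap.add_apply] at *; rw [hx, hy]
  | tmul g g' =>
    rw [ModuleAlgebra.twProd_apply, ModuleAlgebra.twProd_apply, ModuleAlgebra.act2_tmul,
      ModuleAlgebra.act2_tmul, LinearMap.mul'_apply, LinearMap.mul'_apply, map_mul, lift_act,
      lift_act]

/-- The comparison map `T(V) → T(V)_μ` covers the canonical map `T(V) → A_μ`. -/
lemma lift_twist {μ μinv : H ⊗[k] H} (hμ : IsCounitalCocycle μ μinv) (e : A ≃ₗ[k] B)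
    (htw : IsDrinfeldTwist ma μinv e) (t : TensorAlgebra k V) :
    TensorAlgebra.lift k (e.toLinearMap ∘ₗ V.subtype) t =
      e (TensorAlgebra.lift k (LinearMap.id ∘ₗ V.subtype)
        (twistMap (tensorModuleAlgebra (restrictAct ma V hV)) μinv t)) := by
  induction t using TensorAlgebra.induction with
  | algebraMap r =>
    rw [twistMap_algebraMap, AlgHom.commutes, AlgHom.commutes, Algebra.algebraMap_eq_smul_one,
      Algebra.algebraMap_eq_smul_one, map_smul, htw.map_one]
  | ι v =>
    rw [twistMap_ι _ hμ, TensorAlgebra.lift_ι_apply, TensorAlgebra.lift_ι_apply]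
    rfl
  | mul a b ha hb => rw [map_mul, ha, hb, htw.map_mul, twistMap_mul _ hμ, lift_twProd]
  | add a b ha hb => simp only [map_add, ha, hb]

/-- In degree two, the comparison map undoes the action of `μ` on relations. -/
lemma map_twistMap_relTwist {μ μinv : H ⊗[k] H} (hμ : IsCounitalCocycle μ μinv)
    (R : Submodule k (V ⊗[k] V)) :
    ((ma.relTwist μ V R).map (degTwoIncl k V)).map
        (twistMap (tensorModuleAlgebra (restrictAct ma V hV)) μinv) =
      R.map (degTwoIncl k V) := by
  set α := restrictAct ma V hV
  let α2 : H ⊗[k] H →ₐ[k] Module.End k (V ⊗[k] V) :=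
    (tensorEnd k).comp (Algebra.TensorProduct.map α α)
  have hα2 : ∀ h g v w, α2 (h ⊗ₜ g) (v ⊗ₜ w) = α h v ⊗ₜ α g w := fun _ _ _ _ => rfl
  -- `H ⊗ H` acts compatibly on `V ⊗ V` and on `A ⊗ A`
  have hsub : ∀ x s, TensorProduct.map V.subtype V.subtype (α2 x s) =
      ma.act2 x (TensorProduct.map V.subtype V.subtype s) := by
    intro x s
    induction x with
    | zero => simp
    | add x y hx hy => simp only [map_add, LinearMap.add_apply, hx, hy]
    | tmul h g =>
      induction s with
      | zero => simp
      | add x y hx hy => simp only [map_add, hx, hy]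
      | tmul v w => rw [hα2]; rfl
  have hι : ∀ x s, (tensorModuleAlgebra α).twProd x
      (TensorProduct.map (TensorAlgebra.ι k) (TensorAlgebra.ι k) s) = degTwoIncl k V (α2 x s) := by
    intro x s
    induction x with
    | zero => simp
    | add x y hx hy =>
      simp only [ModuleAlgebra.twProd_apply, map_add, LinearMap.add_apply] at *; rw [hx, hy]
    | tmul h g =>
      induction s with
      | zero => simp
      | add x y hx hy => simp only [map_add, hx, hy]
      | tmul v w =>
        rw [hα2]
        simp [degTwoIncl, tensorModuleAlgebra_act_ι]
  have hψ : ∀ s, twistMap (tensorModuleAlgebra α) μinv (degTwoIncl k V s) =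
      degTwoIncl k V (α2 μinv s) := by
    intro s
    rw [← hι, degTwoIncl, LinearMap.comp_apply, twistMap_mul' _ hμ,
      ← LinearMap.comp_apply (TensorProduct.map _ _), ← TensorProduct.map_comp]
    congr 3 <;> exact LinearMap.ext fun v => twistMap_ι _ hμ v
  have hinj : Function.Injective (TensorProduct.map V.subtype V.subtype) :=
    TensorProduct.map_injective_of_flat_flat _ _ V.injective_subtype V.injective_subtype
  have hrel : ma.relTwist μ V R = R.map (α2 μ) := by
    ext s
    constructor
    · rintro ⟨_, ⟨r, hr, rfl⟩, hrs⟩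
      rw [← hsub] at hrs
      exact ⟨r, hr, hinj hrs⟩
    · rintro ⟨r, hr, rfl⟩
      exact ⟨_, ⟨r, hr, rfl⟩, (hsub _ _).symm⟩
  rw [hrel, ← Submodule.map_comp, ← Submodule.map_comp]
  congr 1
  ext1
  refine LinearMap.ext fun s => LinearMap.ext fun s' => ?_
  change twistMap (tensorModuleAlgebra α) μinv (degTwoIncl k V (α2 μ (s ⊗ₜ s'))) = _
  rw [hψ, ← Module.End.mul_apply, ← map_mul, hμ.inv_mul, map_one]
  rfl

/-- If `A = T(V)/(R)`, then `A_μ = T(V)/(R_μ)`: the kernel of `T(V) → A_μ` is the preimage under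
the bijection `twistMap` of the ideal generated by `R`, which is the ideal generated by `R_μ`. -/
lemma IsQuadraticPresentation.twist [Module.Finite k V] {μ μinv : H ⊗[k] H}
    (hμ : IsCounitalCocycle μ μinv) (e : A ≃ₗ[k] B) (htw : IsDrinfeldTwist ma μinv e)
    (R : Submodule k (V ⊗[k] V)) (hV : ma.Stable V)
    (h : IsQuadraticPresentation k V LinearMap.id R) :
    IsQuadraticPresentation k V e.toLinearMap (ma.relTwist μ V R) := by
  obtain ⟨hsurj, hker⟩ := h
  set α := restrictAct ma V hV with hα
  set ψ := twistMap (tensorModuleAlgebra α) μinv with hψ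
  set p := TensorAlgebra.lift k (LinearMap.id ∘ₗ V.subtype) with hp
  set P := R.map (degTwoIncl k V) with hPdef
  have hE := stable_range_ι α
  have hψs : Function.Surjective ψ := twistMap_surjective _ hμ hE
  have hψi : Function.Injective ψ := twistMap_injective _ hμ hE
  have hlift := lift_twist ma hV hμ e htw
  have hmem : ∀ x, p x = 0 ↔ x ∈ ⊤ * P * ⊤ := fun x => by
    rw [← RingHom.mem_ker, hker, mem_relIdeal_iff]
  -- the space of relations is the degree-two part of the kernel, hence an `H`-submodule
  have hP : (tensorModuleAlgebra α).Stable P := by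
    intro h x hx
    have hx2 := map_degTwoIncl_le V R hx
    refine mem_of_mem_ideal_of_degree_two (map_degTwoIncl_le V R) ?_ (hE.pow 2 h x hx2)
    rw [← hmem, hp, lift_act, ← hp, (hmem x).2, map_zero]
    have := Submodule.mul_mem_mul (Submodule.mul_mem_mul
      (show (1 : TensorAlgebra k V) ∈ (⊤ : Submodule k _) from trivial) hx)
      (show (1 : TensorAlgebra k V) ∈ (⊤ : Submodule k _) from trivial)
    rwa [one_mul, mul_one] at this
  have hrel : ((ma.relTwist μ V R).map (degTwoIncl k V)).map ψ = P :=
    map_twistMap_relTwist ma hV hμ R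
  have htop : (⊤ : Submodule k (TensorAlgebra k V)).map ψ = ⊤ := by
    rw [Submodule.map_top, LinearMap.range_eq_top]
    exact hψs
  have hideal : (⊤ * (ma.relTwist μ V R).map (degTwoIncl k V) * ⊤).map ψ = ⊤ * P * ⊤ := by
    have h1 : (⊤ * (ma.relTwist μ V R).map (degTwoIncl k V)).map ψ = ⊤ * P := by
      rw [map_twistMap_mul _ hμ, htop, hrel]
      · rw [htop]; exact ModuleAlgebra.stable_top
      · rw [hrel]; exact hP
    rw [map_twistMap_mul _ hμ, h1, htop]
    · rw [h1]; exact ModuleAlgebra.stable_top.mul hP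
    · rw [htop]; exact ModuleAlgebra.stable_top
  refine ⟨fun b => ?_, ?_⟩
  · obtain ⟨x, hx⟩ := hsurj (e.symm b)
    obtain ⟨y, rfl⟩ := hψs x
    exact ⟨y, by rw [hlift, hx, LinearEquiv.apply_symm_apply]⟩
  · ext x
    rw [mem_relIdeal_iff, RingHom.mem_ker, hlift, LinearEquiv.map_eq_zero_iff, hmem, ← hideal]
    constructor
    · rintro ⟨z, hz, hzx⟩
      rwa [← hψi hzx]
    · intro h; exact ⟨x, h, rfl⟩

end Presentation

end DrinfeldTwist

open DrinfeldTwist TensorProduct in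
/-- Let `H` be a Hopf algebra over a field `k` acting on a quadratic
algebra `A = T(V)/(R)` (with `V = 𝒜 1`, `R ⊆ V ⊗ V`) by degree-preserving endomorphisms
making `A` an `H`-module algebra.  If `μ` is a counital 2-cocycle of `H`, then the
Drinfeld twist `A_μ` (realized as an algebra `B` with the same underlying space via `e`)
is a quadratic algebra, and `A_μ = T(V)/(R_μ)` where `R_μ = { μ ▷ r | r ∈ R }`. -/
theorem drinfeld_twist_of_quadratic_is_quadratic
    {k : Type u} [Field k] {H : Type v} [Ring H] [HopfAlgebra k H]
    {A B : Type u} [Ring A] [Algebra k A] [Ring B] [Algebra k B]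
    (ma : ModuleAlgebra k H A)
    (𝒜 : ℕ → Submodule k A) (R : Submodule k ((𝒜 1) ⊗[k] (𝒜 1)))
    (hquad : QuadraticAlgebra k 𝒜 R)
    (hdeg : ma.DegreePreserving 𝒜)
    (μ μinv : H ⊗[k] H) (hμ : IsCounitalCocycle μ μinv)
    (e : A ≃ₗ[k] B) (htw : IsDrinfeldTwist ma μinv e) :
    QuadraticAlgebra k (fun i => (𝒜 i).map e.toLinearMap)
      (Submodule.map
        (TensorProduct.map
          (Submodule.equivMapOfInjective e.toLinearMap e.injective (𝒜 1)).toLinearMap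
          (Submodule.equivMapOfInjective e.toLinearMap e.injective (𝒜 1)).toLinearMap)
        (ma.relTwist μ (𝒜 1) R)) := by
  have hst : ∀ i, ma.Stable (𝒜 i) := fun i h x hx => hdeg h i (Submodule.mem_map_of_mem hx)
  have hgr := hquad.graded
  have := hquad.locallyFinite 1
  refine { graded := { one_mem := ?_, mul_mem := ?_ }, internal := ?_, connected := ?_,
           locallyFinite := ?_, presentation := ?_ }
  · exact ⟨1, hgr.one_mem, htw.map_one⟩
  · rintro i j _ _ ⟨a, ha, rfl⟩ ⟨b, hb, rfl⟩
    refine ⟨ma.twProd μinv (a ⊗ₜ b), ?_, (htw.map_mul a b).symm⟩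
    have hle : 𝒜 i * 𝒜 j ≤ 𝒜 (i + j) := Submodule.mul_le.2 fun x hx y hy => hgr.mul_mem hx hy
    apply hle
    rw [← (hst i).map_twProd (hst j) hμ.inv_mul]
    exact Submodule.mem_map_of_mem (tmul_mem_tensorSub ha hb)
  · have hint := hquad.internal
    rw [DirectSum.isInternal_submodule_iff_iSupIndep_and_iSup_eq_top] at hint ⊢
    refine ⟨hint.1.map_orderIso (Submodule.orderIsoMapComap e), ?_⟩
    rw [← Submodule.map_iSup, hint.2, Submodule.map_top, LinearMap.range_eq_top]
    exact e.surjective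
  · rw [hquad.connected, Submodule.map_span, Set.image_singleton]
    congr 2
    exact htw.map_one
  · intro i
    have := hquad.locallyFinite i
    exact Module.Finite.map (𝒜 i) e.toLinearMap
  · exact (hquad.presentation.twist ma hμ e htw R (hst 1)).transport (𝒜 1) e _
end
end

section
/- Let H be a Hopf algebra acting by degree-preserving endomorphisms on a quadratic H-module algebra A = T(V)/(R), let μ be a counital 2-cocycle of H, and set R_μ = { μ ▷ r | r ∈ R } ⊆ V⊗V. Equip T(V) with the H_μ-module algebra structure obtained by extending the action on V via the twisted coproduct Δ_μ. Then R_μ is an H_μ-submodule of V⊗V (explicitly, (μ·Δ(h)·μ⁻¹) ▷ (μ ▷ r) ∈ R_μ for all h ∈ H, r ∈ R), and consequently T(V)/(R_μ) is an H_μ-module algebra. -/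
/-!
Write `V = 𝒜 1`. The argument has two ingredients.

* `R` is `H`-stable. The relations can be recovered from the ideal they generate: if the image in
  `T(V)` of `r ∈ V ⊗ V` lies in the ideal `(R)`, then `r ∈ R` (`mem_of_degTwoIncl_mem`). This uses
  no grading on `T(V)`: `T(V)` is represented on `k ⊕ V ⊕ (V ⊗ V)/R`, with `v` raising the degree by
  one; the ideal `(R)` acts by zero, whereas `r` sends `1` to its class modulo `R`. So `R` is the
  kernel of the multiplication `V ⊗ V → A`, and this map is `H`-equivariant as `A` is a module
  algebra. Conjugating by `μ` then makes `R_μ` stable under `Δ_μ(h) = μ Δ(h) μ⁻¹`.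
* A two-sided ideal generated by elements which every `h` keeps inside the ideal is stable
  under the action, whatever the coproduct is (`ModuleAlgebraWith.act_mem_twoSidedSpan`). On
  degree-two elements of `T(V)`, the action of `h` is the componentwise action of `Δ_μ(h)`.
-/


noncomputable section
noncomputable section
namespace DrinfeldTwist
open TensorProduct
variable {k : Type u} [CommRing k] {H : Type v} [Ring H] [HopfAlgebra k H]

/-- The twisted coproduct `Δ_μ(h) = μ · Δ(h) · μ⁻¹` of the Hopf algebra twist `H_μ`
(`H_μ` has the same algebra structure and counit as `H`). -/
def twistedComul (μ μinv : H ⊗[k] H) : H →ₗ[k] H ⊗[k] H :=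
  LinearMap.mulRight k μinv ∘ₗ LinearMap.mulLeft k μ ∘ₗ Coalgebra.comul (R := k)

/-- A module algebra structure over the algebra `H` with respect to an arbitrary
coproduct `Δ'` (and the counit of `H`); with `Δ' = Δ_μ` this is the notion of an
`H_μ`-module algebra. -/
structure ModuleAlgebraWith (Δ' : H →ₗ[k] H ⊗[k] H) (A : Type u) [Ring A] [Algebra k A] :
    Type (max u v) where
  act : H →ₐ[k] Module.End k A
  act_mul : ∀ (h : H) (a b : A),
    act h (a * b) = LinearMap.mul' k A
      (((tensorEnd k).comp (Algebra.TensorProduct.map act act)) (Δ' h) (a ⊗ₜ[k] b))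
  act_one : ∀ h : H, act h 1 = Coalgebra.counit (R := k) h • (1 : A)

end DrinfeldTwist

namespace DrinfeldTwist
open TensorProduct

/-! ### Two-sided ideals -/

section Ideal
variable {T : Type*} [Ring T] {S : Set T}

lemma subset_twoSidedSpan {s : T} (hs : s ∈ S) : s ∈ twoSidedSpan S :=
  Ideal.subset_span ⟨1, s, 1, hs, by simp⟩

lemma twoSidedSpan_mul_right {x : T} (hx : x ∈ twoSidedSpan S) (y : T) :
    x * y ∈ twoSidedSpan S := by
  unfold twoSidedSpan at hx ⊢
  induction hx using Submodule.span_induction with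
  | mem x hx =>
    obtain ⟨a, s, b, hs, rfl⟩ := hx
    exact Ideal.subset_span ⟨a, s, b * y, hs, by simp only [mul_assoc]⟩
  | zero => simp
  | add x z _ _ h1 h2 => rw [add_mul]; exact add_mem h1 h2
  | smul c x _ h => rw [smul_eq_mul, mul_assoc]; exact Ideal.mul_mem_left _ _ h

/-- A ring homomorphism killing a set kills the two-sided ideal generated by it. -/
lemma map_eq_zero_of_mem_twoSidedSpan {T' : Type*} [Semiring T'] (f : T →+* T')
    (hf : ∀ s ∈ S, f s = 0) {x : T} (hx : x ∈ twoSidedSpan S) : f x = 0 := by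
  have : twoSidedSpan S ≤ RingHom.ker f := by
    refine Ideal.span_le.2 ?_
    rintro _ ⟨a, s, b, hs, rfl⟩
    simp [RingHom.mem_ker, hf s hs]
  exact this hx

end Ideal

/-! ### The componentwise action of `H ⊗ H` -/

section Equivariance
variable {k : Type*} [CommRing k] {H : Type*} [Ring H] [Algebra k H]
  {M N : Type*} [AddCommGroup M] [Module k M] [AddCommGroup N] [Module k N]

/-- The componentwise action of `H ⊗ H` on `M ⊗ M` induced by an action of `H` on `M`. -/
def pairAct (act : H →ₐ[k] Module.End k M) : H ⊗[k] H →ₐ[k] Module.End k (M ⊗[k] M) :=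
  (tensorEnd k).comp (Algebra.TensorProduct.map act act)

@[simp]
lemma pairAct_tmul (act : H →ₐ[k] Module.End k M) (x y : H) (a b : M) :
    pairAct act (x ⊗ₜ[k] y) (a ⊗ₜ[k] b) = act x a ⊗ₜ[k] act y b := by
  simp [pairAct, tensorEnd, Module.endTensorEndAlgHom_apply]

/-- If `f` is `H`-equivariant, then `f ⊗ f` is `H ⊗ H`-equivariant. -/
lemma map_pairAct (actM : H →ₐ[k] Module.End k M) (actN : H →ₐ[k] Module.End k N)
    (f : M →ₗ[k] N) (hf : ∀ h m, f (actM h m) = actN h (f m)) (t : H ⊗[k] H) (r : M ⊗[k] M) :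
    TensorProduct.map f f (pairAct actM t r) = pairAct actN t (TensorProduct.map f f r) := by
  induction t using TensorProduct.induction_on with
  | zero => simp
  | add t t' h h' => simp only [map_add, LinearMap.add_apply, h, h']
  | tmul x y =>
    induction r using TensorProduct.induction_on with
    | zero => simp
    | add r r' h h' => simp only [map_add, h, h']
    | tmul a b => simp [hf]

/-- If every product `(x ▷ a) * (y ▷ b)` lies in `J`, then so does the product of the two legs of
`t ▷ (a ⊗ b)`, for every `t ∈ H ⊗ H`. -/
lemma mul'_pairAct_mem {T : Type*} [Ring T] [Algebra k T] (act : H →ₐ[k] Module.End k T)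
    (J : Ideal T) (a b : T) (hab : ∀ x y, act x a * act y b ∈ J) (t : H ⊗[k] H) :
    LinearMap.mul' k T (pairAct act t (a ⊗ₜ[k] b)) ∈ J := by
  induction t using TensorProduct.induction_on with
  | zero => simp
  | add t t' h h' =>
    simp only [map_add, LinearMap.add_apply]
    exact add_mem h h'
  | tmul x y => simpa using hab x y

end Equivariance

/-! ### Stable ideals of module algebras -/

section ModuleAlgebras
variable {k : Type u} [CommRing k] {H : Type v} [Ring H] [HopfAlgebra k H]

/-- The module algebra axiom, extended from pure tensors to all of `T ⊗ T`. -/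
lemma act_mul' {T : Type*} [Ring T] [Algebra k T] (act : H →ₐ[k] Module.End k T)
    (Δ' : H →ₗ[k] H ⊗[k] H)
    (hmul : ∀ (h : H) (a b : T),
      act h (a * b) = LinearMap.mul' k T (pairAct act (Δ' h) (a ⊗ₜ[k] b)))
    (h : H) (z : T ⊗[k] T) :
    act h (LinearMap.mul' k T z) = LinearMap.mul' k T (pairAct act (Δ' h) z) := by
  induction z using TensorProduct.induction_on with
  | zero => simp
  | add z z' h h' => simp only [map_add, h, h']
  | tmul a b => simpa using hmul h a b

/-- In a module algebra over any coproduct, the two-sided ideal generated by `S` is stable as soon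
as the action maps `S` into it. -/
lemma ModuleAlgebraWith.act_mem_twoSidedSpan {Δ' : H →ₗ[k] H ⊗[k] H} {T : Type u} [Ring T]
    [Algebra k T] (m : ModuleAlgebraWith Δ' T) {S : Set T}
    (hS : ∀ h, ∀ s ∈ S, m.act h s ∈ twoSidedSpan S) {x : T} (hx : x ∈ twoSidedSpan S) (h : H) :
    m.act h x ∈ twoSidedSpan S := by
  have key : ∀ (a b : T) (h : H), (∀ x y, m.act x a * m.act y b ∈ twoSidedSpan S) →
      m.act h (a * b) ∈ twoSidedSpan S := fun a b h hab => by
    rw [m.act_mul]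
    exact mul'_pairAct_mem m.act _ a b hab _
  rw [twoSidedSpan] at hx
  induction hx using Submodule.span_induction generalizing h with
  | mem x hx =>
    obtain ⟨a, s, b, hs, rfl⟩ := hx
    refine key _ _ h fun x _ => twoSidedSpan_mul_right (key _ _ x fun _ y => ?_) _
    exact Ideal.mul_mem_left _ _ (hS y s hs)
  | zero => simp
  | add x z _ _ h1 h2 => rw [map_add]; exact add_mem (h1 h) (h2 h)
  | smul c x _ ih => exact key _ _ h fun _ y => Ideal.mul_mem_left _ _ (ih y)

end ModuleAlgebras

/-! ### Relations of a quadratic algebra -/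

section Relations
variable {k : Type*} [CommRing k] {A : Type*} [Ring A] [Algebra k A]

/-- Left multiplication by `v ∈ V` on `k ⊕ V ⊕ Q`, for a linear map `q : V ⊗ V → Q`:
`(c, v', w) ↦ (0, c v, q (v ⊗ v'))`. For the quotient map `q` by `R` this is the truncation of the
quadratic algebra `T(V)/(R)` to degrees at most two. -/
def truncAct (V : Submodule k A) {Q : Type*} [AddCommGroup Q] [Module k Q]
    (q : V ⊗[k] V →ₗ[k] Q) : V →ₗ[k] Module.End k (k × V × Q) :=
  LinearMap.mk₂ k
    (fun (v : V) (x : k × V × Q) => ((0 : k), x.1 • v, q (v ⊗ₜ[k] x.2.1)))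
    (fun v v' x => by simp [TensorProduct.add_tmul])
    (fun c v x => by simp [← TensorProduct.smul_tmul', smul_comm c])
    (fun v x y => by simp [TensorProduct.tmul_add, add_smul])
    (fun c v x => by simp [TensorProduct.tmul_smul, mul_smul])

lemma lift_truncAct_degTwoIncl (V : Submodule k A) {Q : Type*} [AddCommGroup Q] [Module k Q]
    (q : V ⊗[k] V →ₗ[k] Q) (r : V ⊗[k] V) (x : k × V × Q) :
    TensorAlgebra.lift k (truncAct V q) (degTwoIncl k V r) x = (0, 0, x.1 • q r) := by
  induction r using TensorProduct.induction_on with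
  | zero => simp; rfl
  | add r r' h h' => simp only [map_add, LinearMap.add_apply, h, h']; simp
  | tmul v w => simp [degTwoIncl, truncAct, TensorProduct.tmul_smul]

/-- Every submodule is the kernel of a linear map. Stated for an arbitrary `M`, because the quotient
of `V ⊗ V` for `V` a submodule of `A` is not found by instance search. -/
lemma exists_ker_eq {k : Type*} [CommRing k] {M : Type w} [AddCommGroup M] [Module k M]
    (R : Submodule k M) :
    ∃ (Q : Type w) (_ : AddCommGroup Q) (_ : Module k Q) (q : M →ₗ[k] Q), ∀ r, q r = 0 ↔ r ∈ R :=
  ⟨M ⧸ R, inferInstance, inferInstance, R.mkQ, fun r => by simp⟩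

/-- The degree-two part of the ideal `(R)` of `T(V)` is `R` itself. -/
lemma mem_of_degTwoIncl_mem (V : Submodule k A) (R : Submodule k (V ⊗[k] V)) {r : V ⊗[k] V}
    (hr : degTwoIncl k V r ∈ twoSidedSpan (degTwoIncl k V '' (R : Set (V ⊗[k] V)))) : r ∈ R := by
  let _ : AddCommGroup (V ⊗[k] V) := TensorProduct.addCommGroup
  obtain ⟨Q, _, _, q, hq⟩ := exists_ker_eq (k := k) (M := V ⊗[k] V) R
  have h0 : TensorAlgebra.lift k (truncAct V q) (degTwoIncl k V r) = 0 := by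
    refine map_eq_zero_of_mem_twoSidedSpan
      (TensorAlgebra.lift k (truncAct V q)).toRingHom ?_ hr
    rintro _ ⟨s, hs, rfl⟩
    refine LinearMap.ext fun x => ?_
    refine (lift_truncAct_degTwoIncl V q s x).trans ?_
    rw [(hq s).2 hs]
    simp
  have h1 := lift_truncAct_degTwoIncl V q r (1, 0, 0)
  rw [h0] at h1
  have h2 := congrArg (fun z => z.2.2) h1
  simp only [LinearMap.zero_apply, one_smul] at h2
  exact (hq r).1 h2.symm

/-- In a quadratic presentation, `R` is the kernel of the multiplication `V ⊗ V → A`. -/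
lemma mem_relations_iff (V : Submodule k A) (R : Submodule k (V ⊗[k] V))
    (hp : IsQuadraticPresentation k V (LinearMap.id : A →ₗ[k] A) R) (r : V ⊗[k] V) :
    r ∈ R ↔ LinearMap.mul' k A (TensorProduct.map V.subtype V.subtype r) = 0 := by
  have hl : TensorAlgebra.lift k (LinearMap.id ∘ₗ V.subtype) (degTwoIncl k V r) =
      LinearMap.mul' k A (TensorProduct.map V.subtype V.subtype r) := by
    induction r using TensorProduct.induction_on with
    | zero => simp
    | add r r' h h' => simp only [map_add, h, h']
    | tmul v w => simp [degTwoIncl]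
  rw [← hl, ← RingHom.mem_ker, hp.2]
  exact ⟨fun h => subset_twoSidedSpan ⟨r, h, rfl⟩, mem_of_degTwoIncl_mem V R⟩

end Relations

end DrinfeldTwist


open DrinfeldTwist TensorProduct in
/-- Let `H` act degree-preservingly on the quadratic `H`-module
algebra `A = T(V)/(R)`, let `μ` be a counital 2-cocycle and `R_μ = μ ▷ R ⊆ V ⊗ V`.
Equip `T(V)` with an `H_μ`-module algebra structure extending the action on `V` via the
twisted coproduct `Δ_μ`.  Then `R_μ` is an `H_μ`-submodule — explicitly,
`(μ·Δ(h)·μ⁻¹) ▷ (μ ▷ r) ∈ R_μ` for all `h ∈ H`, `r ∈ R` — and consequently the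
defining ideal of `T(V)/(R_μ)` is `H_μ`-stable, so that `T(V)/(R_μ)` is an
`H_μ`-module algebra. -/
theorem twisted_relations_are_Hmu_submodule
    {k : Type u} [Field k] {H : Type v} [Ring H] [HopfAlgebra k H]
    {A : Type u} [Ring A] [Algebra k A]
    (ma : ModuleAlgebra k H A)
    (𝒜 : ℕ → Submodule k A) (R : Submodule k ((𝒜 1) ⊗[k] (𝒜 1)))
    (hquad : QuadraticAlgebra k 𝒜 R)
    (hdeg : ma.DegreePreserving 𝒜)
    (μ μinv : H ⊗[k] H) (hμ : IsCounitalCocycle μ μinv)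
    -- the restriction of the `H`-action to `V = 𝒜 1`:
    (actV : H →ₐ[k] Module.End k (𝒜 1))
    (hactV : ∀ (h : H) (v : 𝒜 1), ((actV h v : 𝒜 1) : A) = ma.act h (v : A))
    -- the `H_μ`-module algebra structure on `T(V)` extending `actV` via `Δ_μ`:
    (maTμ : ModuleAlgebraWith (twistedComul μ μinv) (TensorAlgebra k (𝒜 1)))
    (hextends : ∀ (h : H) (v : 𝒜 1),
      maTμ.act h (TensorAlgebra.ι k v) = TensorAlgebra.ι k (actV h v)) :
    -- `R_μ` is an `H_μ`-submodule of `V ⊗ V`, explicitly: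
    (∀ (h : H), ∀ r ∈ Submodule.map (ma.act2 μ)
        (Submodule.map (TensorProduct.map (𝒜 1).subtype (𝒜 1).subtype) R),
      ma.act2 (μ * Coalgebra.comul (R := k) h * μinv) r ∈
        Submodule.map (ma.act2 μ)
          (Submodule.map (TensorProduct.map (𝒜 1).subtype (𝒜 1).subtype) R)) ∧
    -- consequently the defining ideal of `T(V)/(R_μ)` is `H_μ`-stable:
    (∀ (h : H), ∀ x ∈ twoSidedSpan ((degTwoIncl k (𝒜 1)) ''
          ((ma.relTwist μ (𝒜 1) R : Set ((𝒜 1) ⊗[k] (𝒜 1))))),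
      maTμ.act h x ∈ twoSidedSpan ((degTwoIncl k (𝒜 1)) ''
          ((ma.relTwist μ (𝒜 1) R : Set ((𝒜 1) ⊗[k] (𝒜 1)))))) := by
  
  have hmap : ∀ (t : H ⊗[k] H) (r : (𝒜 1) ⊗[k] (𝒜 1)),
      TensorProduct.map (𝒜 1).subtype (𝒜 1).subtype (pairAct actV t r) =
        ma.act2 t (TensorProduct.map (𝒜 1).subtype (𝒜 1).subtype r) :=
    map_pairAct actV ma.act (𝒜 1).subtype hactV
  -- `R` is the kernel of the equivariant multiplication `V ⊗ V → A`.
  have hR : ∀ (h : H), ∀ r ∈ R, pairAct actV (Coalgebra.comul (R := k) h) r ∈ R := by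
    intro h r hr
    rw [mem_relations_iff _ _ hquad.presentation] at hr ⊢
    rw [hmap]
    refine (act_mul' ma.act (Coalgebra.comul (R := k)) ma.act_mul h _).symm.trans ?_
    rw [hr, map_zero]
  have h1 : ∀ (h : H), ∀ r ∈ Submodule.map (ma.act2 μ)
        (Submodule.map (TensorProduct.map (𝒜 1).subtype (𝒜 1).subtype) R),
      ma.act2 (μ * Coalgebra.comul (R := k) h * μinv) r ∈
        Submodule.map (ma.act2 μ)
          (Submodule.map (TensorProduct.map (𝒜 1).subtype (𝒜 1).subtype) R) := by
    rintro h _ ⟨_, ⟨r, hr, rfl⟩, rfl⟩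
    refine ⟨_, ⟨_, hR h r hr, rfl⟩, ?_⟩
    rw [hmap, ← Module.End.mul_apply, ← Module.End.mul_apply, ← map_mul, ← map_mul,
      mul_assoc, hμ.inv_mul, mul_one]
  refine ⟨h1, fun h x hx => maTμ.act_mem_twoSidedSpan ?_ hx h⟩
  rintro g _ ⟨s, hs, rfl⟩
  refine subset_twoSidedSpan ⟨pairAct actV (twistedComul μ μinv g) s, ?_, ?_⟩
  · refine Submodule.mem_comap.2 ?_
    rw [hmap]
    exact h1 g _ hs
  · refine Eq.trans ?_ (act_mul' maTμ.act (twistedComul μ μinv) maTμ.act_mul g _).symm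
    exact congrArg (LinearMap.mul' k _)
      (map_pairAct actV maTμ.act (TensorAlgebra.ι k) (fun h v => (hextends h v).symm) _ s)
end
end
end
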